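/- Let c > 0 and let τ(s) = s + ic be the corresponding parabolic self-map of the right half-plane ℂ₊ = {Re s > 0}. Let h̃ be holomorphic on ℂ₊ and suppose the weighted composition operator W̃ : f ↦ h̃·(f∘τ) is bounded both on the Hardy space H²(ℂ₊) and on the Dirichlet space 𝒟(ℂ₊). Then for every λ ∈ ℂ and every integer n ≥ 1, the operator norms satisfy ‖(W̃ − λI)ⁿ‖_{H²(ℂ₊)} ≤ ‖(W̃ − λI)ⁿ‖_{𝒟(ℂ₊)}; consequently the spectral radii satisfy ρ_{H²(ℂ₊)}(W̃ − λI) ≤ ρ_{𝒟(ℂ₊)}(W̃ − λI). -/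

import Mathlib

open Complex MeasureTheory Metric Set Filter

noncomputable section

/-- The open unit disc in the complex plane. -/
def unitDisc : Set ℂ := Metric.ball 0 1

/-- The square of the Dirichlet norm:
`‖f‖²_𝒟 = |f(0)|² + ∫_𝔻 |f′(z)|² dA(z)`, with `A` normalized area measure. -/
def dirNormSq (f : ℂ → ℂ) : ℝ :=
  ‖f 0‖ ^ 2 + (1 / Real.pi) * ∫ z in unitDisc, ‖deriv f z‖ ^ 2

/-- Membership in the Dirichlet space `𝒟`: `f` is holomorphic on `𝔻` and
`|f′|²` is integrable over `𝔻`. -/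
def MemDirichlet (f : ℂ → ℂ) : Prop :=
  DifferentiableOn ℂ f unitDisc ∧
    IntegrableOn (fun z : ℂ => ‖deriv f z‖ ^ 2) unitDisc

open scoped Classical

/-- The right half-plane `ℂ₊ = {Re s > 0}`. -/
def RHP : Set ℂ := {s : ℂ | 0 < s.re}

/-- The conformal involution `M(z) = (1 − z)/(1 + z)` mapping `𝔻` onto `ℂ₊`. -/
def Mmap (z : ℂ) : ℂ := (1 - z) / (1 + z)

/-- The square of the Hardy norm on the right half-plane:
`‖f‖² = sup_{x>0} ∫_ℝ |f(x+iy)|² dy`. -/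
def hpHardyNormSq (f : ℂ → ℂ) : ℝ :=
  ⨆ x : {x : ℝ // 0 < x}, ∫ y : ℝ, ‖f ((x : ℝ) + (y : ℂ) * Complex.I)‖ ^ 2

/-- Membership in the Hardy space `H²(ℂ₊)`. -/
def MemHpHardy (f : ℂ → ℂ) : Prop :=
  DifferentiableOn ℂ f RHP ∧
    (∀ x : ℝ, 0 < x →
      Integrable fun y : ℝ => ‖f ((x : ℂ) + (y : ℂ) * Complex.I)‖ ^ 2) ∧
    ∃ M : ℝ, ∀ x : ℝ, 0 < x →
      (∫ y : ℝ, ‖f ((x : ℂ) + (y : ℂ) * Complex.I)‖ ^ 2) ≤ M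

/-- The square of the Dirichlet norm on the right half-plane:
`‖g‖_{𝒟(ℂ₊)} = ‖g∘M‖_𝒟`. -/
def hpDirNormSq (g : ℂ → ℂ) : ℝ := dirNormSq fun z => g (Mmap z)

/-- Membership in the Dirichlet space `𝒟(ℂ₊)`: `g` is holomorphic on `ℂ₊`
and `g∘M ∈ 𝒟`. -/
def MemHpDirichlet (g : ℂ → ℂ) : Prop :=
  DifferentiableOn ℂ g RHP ∧ MemDirichlet fun z => g (Mmap z)

/-- `H²(ℂ₊)`, realized as functions normalized to vanish off `ℂ₊`. -/
def H2Space : Set (ℂ → ℂ) :=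
  {f | MemHpHardy f ∧ ∀ s, s ∉ RHP → f s = 0}

/-- `𝒟(ℂ₊)`, realized as functions normalized to vanish off `ℂ₊`. -/
def DCSpace : Set (ℂ → ℂ) :=
  {g | MemHpDirichlet g ∧ ∀ s, s ∉ RHP → g s = 0}

/-- The weighted composition operator `W̃ : f ↦ h̃·(f∘τ)` on the right
half-plane, with `τ(s) = s + ic` (normalized to vanish off `ℂ₊`). -/
def WopHp (h : ℂ → ℂ) (c : ℝ) : (ℂ → ℂ) → ℂ → ℂ :=
  fun f s => if s ∈ RHP then h s * f (s + (c : ℂ) * Complex.I) else 0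

/-- The operator `T − λI`. -/
def opSub (T : (ℂ → ℂ) → ℂ → ℂ) (lam : ℂ) : (ℂ → ℂ) → ℂ → ℂ :=
  fun f s => T f s - lam * f s

/-- The square of the operator norm of `T` acting on `H²(ℂ₊)`. -/
def opNormSqH2 (T : (ℂ → ℂ) → ℂ → ℂ) : ℝ :=
  sInf {C : ℝ | 0 ≤ C ∧ ∀ f ∈ H2Space, T f ∈ H2Space ∧
    hpHardyNormSq (T f) ≤ C * hpHardyNormSq f}

/-- The square of the operator norm of `T` acting on `𝒟(ℂ₊)`. -/
def opNormSqD (T : (ℂ → ℂ) → ℂ → ℂ) : ℝ :=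
  sInf {C : ℝ | 0 ≤ C ∧ ∀ g ∈ DCSpace, T g ∈ DCSpace ∧
    hpDirNormSq (T g) ≤ C * hpDirNormSq g}

/-- The spectral radius of `T` on `H²(ℂ₊)`, via Gelfand's formula
(`opNormSqH2` is the squared norm, whence the exponent `1/(2n)`). -/
def rhoH2 (T : (ℂ → ℂ) → ℂ → ℂ) : ℝ :=
  limsup (fun n : ℕ => (opNormSqH2 (T^[n])) ^ (1 / (2 * (n : ℝ)))) atTop

/-- The spectral radius of `T` on `𝒟(ℂ₊)`, via Gelfand's formula. -/
def rhoD (T : (ℂ → ℂ) → ℂ → ℂ) : ℝ :=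
  limsup (fun n : ℕ => (opNormSqD (T^[n])) ^ (1 / (2 * (n : ℝ)))) atTop


lemma isOpen_RHP : IsOpen RHP := isOpen_lt continuous_const Complex.continuous_re

/-- Squared `L²` norm on the vertical line `Re s = x`, as an extended nonnegative real. -/
def Lsq (G : ℂ → ℂ) (x : ℝ) : ENNReal :=
  ∫⁻ y : ℝ, ‖G ((x : ℂ) + (y : ℂ) * Complex.I)‖ₑ ^ 2

lemma add_mul_I_mem {s : ℂ} (hs : s ∈ RHP) (y : ℝ) : s + (y : ℂ) * Complex.I ∈ RHP := by
  simpa [RHP] using hs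

lemma continuous_line {G : ℂ → ℂ} (hG : ContinuousOn G RHP) {s : ℂ} (hs : s ∈ RHP) :
    Continuous fun y : ℝ => G (s + (y : ℂ) * Complex.I) :=
  hG.comp_continuous (by fun_prop) (fun y => add_mul_I_mem hs y)

lemma dual_hasDerivAt {G : ℂ → ℂ} (hG : DifferentiableOn ℂ G RHP) {ψ : ℝ → ℂ}
    (hψ : Continuous ψ) (R : ℝ) {s : ℂ} (hs : s ∈ RHP) :
    HasDerivAt (fun s : ℂ => ∫ y in (-R)..R, G (s + (y : ℂ) * Complex.I) * ψ y)
      (∫ y in (-R)..R, deriv G (s + (y : ℂ) * Complex.I) * ψ y) s := by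
  have hs' : 0 < s.re := hs
  have hdc : ContinuousOn (deriv G) RHP := (hG.deriv isOpen_RHP).continuousOn
  set K : Set ℂ := (fun p : ℂ × ℝ => p.1 + (p.2 : ℂ) * Complex.I) ''
    (closedBall s (s.re / 2) ×ˢ uIcc (-R) R) with hK
  have hKc : IsCompact K :=
    ((isCompact_closedBall _ _).prod isCompact_uIcc).image (by fun_prop)
  have hball : ∀ z ∈ closedBall s (s.re / 2), z ∈ RHP := by
    intro z hz
    have h1 : ‖z - s‖ ≤ s.re / 2 := by simpa [dist_eq_norm] using hz
    have h2 := (Complex.abs_re_le_norm (z - s)).trans h1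
    rw [abs_le] at h2
    simp only [Complex.sub_re] at h2
    show 0 < z.re
    linarith [h2.1]
  have hKsub : K ⊆ RHP := by
    rintro _ ⟨p, hp, rfl⟩
    exact add_mul_I_mem (hball _ hp.1) _
  obtain ⟨B, hB⟩ := hKc.exists_bound_of_continuousOn (hdc.mono hKsub)
  refine (intervalIntegral.hasDerivAt_integral_of_dominated_loc_of_deriv_le
    (𝕜 := ℂ) (μ := volume) (a := -R) (b := R) (bound := fun y => B * ‖ψ y‖)
    (F := fun s y => G (s + (y : ℂ) * Complex.I) * ψ y)
    (F' := fun s y => deriv G (s + (y : ℂ) * Complex.I) * ψ y) (x₀ := s)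
    (s := closedBall s (s.re / 2)) (closedBall_mem_nhds _ (by linarith)) ?_ ?_ ?_ ?_ ?_ ?_).2
  · filter_upwards [isOpen_RHP.mem_nhds hs] with z hz
    exact ((continuous_line hG.continuousOn hz).mul hψ).aestronglyMeasurable
  · exact ((continuous_line hG.continuousOn hs).mul hψ).intervalIntegrable _ _
  · exact ((continuous_line hdc hs).mul hψ).aestronglyMeasurable
  · refine Eventually.of_forall fun y hy z hz => ?_
    rw [norm_mul]
    exact mul_le_mul_of_nonneg_right
      (hB _ ⟨(z, y), ⟨hz, uIoc_subset_uIcc hy⟩, rfl⟩) (norm_nonneg _)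
  · exact (continuous_const.mul hψ.norm).intervalIntegrable _ _
  · refine Eventually.of_forall fun y hy z hz => ?_
    have h1 : HasDerivAt G (deriv G (z + (y : ℂ) * Complex.I)) (z + (y : ℂ) * Complex.I) :=
      (hG.differentiableAt (isOpen_RHP.mem_nhds (add_mul_I_mem (hball z hz) y))).hasDerivAt
    have h2 : HasDerivAt (fun w : ℂ => G (w + (y : ℂ) * Complex.I))
        (deriv G (z + (y : ℂ) * Complex.I)) z := h1.comp_add_const z _
    exact h2.mul_const _

lemma dual_bound {G : ℂ → ℂ} (hG : ContinuousOn G RHP) {ψ : ℝ → ℂ}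
    (hψ : Continuous ψ) {R : ℝ} (hR : 0 ≤ R) {s : ℂ} (hs : s ∈ RHP) {P : ℝ}
    (hP0 : 0 ≤ P) (hP : Lsq G s.re ≤ ENNReal.ofReal P) :
    ‖∫ y in (-R)..R, G (s + (y : ℂ) * Complex.I) * ψ y‖ ≤
      Real.sqrt P * Real.sqrt (∫ y in (-R)..R, ‖ψ y‖ ^ 2) := by
  have hR' : -R ≤ R := by linarith
  have hQ0 : 0 ≤ ∫ y in (-R)..R, ‖ψ y‖ ^ 2 :=
    intervalIntegral.integral_nonneg hR' (fun _ _ => by positivity)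
  set Q := ∫ y in (-R)..R, ‖ψ y‖ ^ 2 with hQ
  have hc := continuous_line hG hs
  have h1 : ∫⁻ y in Ioc (-R) R, ‖G (s + (y : ℂ) * Complex.I)‖ₑ ^ (2:ℝ) ≤ ENNReal.ofReal P := by
    refine le_trans ?_ hP
    refine le_trans (setLIntegral_le_lintegral _ _) ?_
    unfold Lsq
    rw [← lintegral_add_left_eq_self
      (fun y : ℝ => ‖G ((s.re : ℂ) + (y : ℂ) * Complex.I)‖ₑ ^ 2) s.im]
    refine le_of_eq (lintegral_congr fun y => ?_)
    have : s + (y : ℂ) * Complex.I = (s.re : ℂ) + ((s.im + y : ℝ) : ℂ) * Complex.I := by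
      apply Complex.ext <;> simp
    rw [this]
    norm_num
  have h2 : ∫⁻ y in Ioc (-R) R, ‖ψ y‖ₑ ^ (2:ℝ) = ENNReal.ofReal Q := by
    rw [hQ, intervalIntegral.integral_of_le hR',
      ofReal_integral_eq_lintegral_ofReal]
    · refine lintegral_congr fun y => ?_
      rw [ENNReal.ofReal_pow (norm_nonneg _), ofReal_norm]
      norm_num
    · exact ((hψ.norm.pow 2).intervalIntegrable (-R) R).1
    · exact Eventually.of_forall fun y => by positivity
  have h3 := ENNReal.lintegral_mul_le_Lp_mul_Lq (volume.restrict (Ioc (-R) R))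
    Real.HolderConjugate.two_two (f := fun y : ℝ => ‖G (s + (y : ℂ) * Complex.I)‖ₑ)
    (g := fun y => ‖ψ y‖ₑ) hc.enorm.aemeasurable hψ.enorm.aemeasurable
  rw [h2] at h3
  have h4 : ‖∫ y in (-R)..R, G (s + (y : ℂ) * Complex.I) * ψ y‖ₑ ≤
      ENNReal.ofReal (Real.sqrt P * Real.sqrt Q) := by
    rw [intervalIntegral.integral_of_le hR']
    refine (enorm_integral_le_lintegral_enorm _).trans ?_
    simp only [enorm_mul]
    refine le_trans h3 ?_
    rw [ENNReal.ofReal_mul (Real.sqrt_nonneg _), Real.sqrt_eq_rpow, Real.sqrt_eq_rpow,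
      ← ENNReal.ofReal_rpow_of_nonneg hP0 (by norm_num),
      ← ENNReal.ofReal_rpow_of_nonneg hQ0 (by norm_num)]
    gcongr
  rw [← ofReal_norm] at h4
  exact (ENNReal.ofReal_le_ofReal_iff (by positivity)).1 h4

/-- Passing from truncated integrals to the whole line. -/
lemma Lsq_le_of_trunc {G : ℂ → ℂ} (hG : ContinuousOn G RHP) {x : ℝ} (hx : 0 < x) {P : ℝ}
    (h : ∀ R : ℝ, 0 ≤ R →
      ∫ y in (-R)..R, ‖G ((x : ℂ) + (y : ℂ) * Complex.I)‖ ^ 2 ≤ P) :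
    Lsq G x ≤ ENNReal.ofReal P := by
  have hx' : (x : ℂ) ∈ RHP := by simpa [RHP] using hx
  have hc := continuous_line hG hx'
  have hcov : AECover (volume : Measure ℝ) atTop fun R : ℝ => Ioc (-R) R :=
    aecover_Ioc tendsto_neg_atTop_atBot tendsto_id
  have ht := hcov.lintegral_tendsto_of_countably_generated
    (f := fun y : ℝ => ‖G ((x : ℂ) + (y : ℂ) * Complex.I)‖ₑ ^ 2)
    (hc.enorm.measurable.pow_const 2).aemeasurable
  refine le_of_tendsto ht ?_
  filter_upwards [eventually_ge_atTop 0] with R hR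
  refine le_trans (le_of_eq ?_) (ENNReal.ofReal_le_ofReal (h R hR))
  rw [intervalIntegral.integral_of_le (by linarith), ofReal_integral_eq_lintegral_ofReal]
  · refine lintegral_congr fun y => ?_
    rw [ENNReal.ofReal_pow (norm_nonneg _), ofReal_norm]
  · exact ((hc.norm.pow 2).intervalIntegrable (-R) R).1
  · exact Eventually.of_forall fun y => by positivity

lemma mem_RHP_of_dist {s z : ℂ} {r : ℝ} (hz : dist z s ≤ r) : s.re - r ≤ z.re := by
  have h2 := (Complex.abs_re_le_norm (z - s)).trans ((dist_eq_norm z s).symm.le.trans hz)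
  rw [abs_le] at h2
  simp only [Complex.sub_re] at h2
  linarith [h2.1]

lemma diffOn_ball {F : ℂ → ℂ} (hF : DifferentiableOn ℂ F RHP) {s : ℂ} {r : ℝ}
    (hr : r < s.re) : DiffContOnCl ℂ F (ball s r) := by
  apply DifferentiableOn.diffContOnCl
  refine hF.mono fun z hz => ?_
  have := mem_RHP_of_dist (closure_ball_subset_closedBall hz)
  show 0 < z.re
  linarith

lemma conj_mul_int {g : ℝ → ℂ} (R : ℝ) :
    ∫ y in (-R)..R, g y * (starRingEnd ℂ) (g y) = ((∫ y in (-R)..R, ‖g y‖ ^ 2 : ℝ) : ℂ) := by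
  rw [← intervalIntegral.integral_ofReal]
  refine intervalIntegral.integral_congr fun y _ => ?_
  simp [Complex.mul_conj, Complex.normSq_eq_norm_sq]

/-- Cauchy estimate on vertical lines. -/
lemma Lsq_deriv_le {G : ℂ → ℂ} (hG : DifferentiableOn ℂ G RHP) {N : ℝ} (hN : 0 ≤ N)
    (hb : ∀ x, 0 < x → Lsq G x ≤ ENNReal.ofReal N) {r x : ℝ} (hr : 0 < r) (hrx : r < x) :
    Lsq (deriv G) x ≤ ENNReal.ofReal (N / r ^ 2) := by
  have hx : 0 < x := hr.trans hrx
  have hx' : (x : ℂ) ∈ RHP := by simpa [RHP] using hx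
  have hdc : ContinuousOn (deriv G) RHP := (hG.deriv isOpen_RHP).continuousOn
  refine Lsq_le_of_trunc hdc hx fun R hR => ?_
  have hcl := continuous_line hdc hx'
  set ψ : ℝ → ℂ := fun y => (starRingEnd ℂ) (deriv G ((x : ℂ) + (y : ℂ) * Complex.I)) with hψd
  have hψ : Continuous ψ := Complex.continuous_conj.comp hcl
  set J := ∫ y in (-R)..R, ‖deriv G ((x : ℂ) + (y : ℂ) * Complex.I)‖ ^ 2 with hJ
  have hJ0 : 0 ≤ J := intervalIntegral.integral_nonneg (by linarith) (fun _ _ => by positivity)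
  have hJψ : ∫ y in (-R)..R, ‖ψ y‖ ^ 2 = J := by
    refine intervalIntegral.integral_congr fun y _ => ?_
    simp [hψd]
  set F : ℂ → ℂ := fun s => ∫ y in (-R)..R, G (s + (y : ℂ) * Complex.I) * ψ y with hF
  have hFd : DifferentiableOn ℂ F RHP := fun s hs =>
    (dual_hasDerivAt hG hψ R hs).differentiableAt.differentiableWithinAt
  have h1 : deriv F x = (J : ℂ) := by
    rw [(dual_hasDerivAt hG hψ R hx').deriv]
    exact conj_mul_int (g := fun y : ℝ => deriv G ((x : ℂ) + (y : ℂ) * Complex.I)) R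
  have h2 : ‖deriv F x‖ ≤ (Real.sqrt N * Real.sqrt J) / r := by
    refine Complex.norm_deriv_le_of_forall_mem_sphere_norm_le hr
      (diffOn_ball hFd (by simpa using hrx)) fun z hz => ?_
    have hz1 := mem_RHP_of_dist (le_of_eq (mem_sphere.1 hz))
    simp only [Complex.ofReal_re] at hz1
    have hz0 : 0 < z.re := by linarith
    rw [← hJψ]
    exact dual_bound hG.continuousOn hψ hR hz0 hN (hb _ hz0)
  rw [h1, Complex.norm_real, Real.norm_of_nonneg hJ0, le_div_iff₀ hr] at h2
  rw [le_div_iff₀ (by positivity)]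
  have h3 := Real.sq_sqrt hJ0
  have h4 := Real.sq_sqrt hN
  rcases hJ0.eq_or_lt with h | h
  · rw [← h]; simpa using hN
  · have h5 : (J * r) ^ 2 ≤ (Real.sqrt N * Real.sqrt J) ^ 2 := by gcongr
    rw [mul_pow, mul_pow, h3, h4] at h5
    nlinarith

/-- The scalar estimate behind the lower bound. -/
lemma scalar_est {F : ℂ → ℂ} (hF : DifferentiableOn ℂ F RHP) {a x x₀ A B : ℝ} (ha : 0 < a)
    (hx : 0 < x) (hxx : x ≤ x₀) (hB : ∀ s ∈ RHP, ‖F s‖ ≤ B * Real.exp (-a * s.re))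
    (hA : ∀ s : ℂ, s.re = x → ‖deriv F s‖ ≤ A) :
    ‖F x₀‖ ≤ A / a * Real.exp (-a * (x₀ - x)) := by
  have hB0 : 0 ≤ B := by
    have := (norm_nonneg _).trans (hB 1 (by simp [RHP]))
    exact nonneg_of_mul_nonneg_left this (Real.exp_pos _)
  have hA0 : 0 ≤ A := (norm_nonneg _).trans (hA x (by simp))
  have hdd : DifferentiableOn ℂ (deriv F) RHP := hF.deriv isOpen_RHP
  -- a bound for the derivative
  have hder : ∀ s : ℂ, x ≤ s.re →
      ‖deriv F s‖ ≤ B * Real.exp (-a * (s.re - x / 2)) / (x / 2) := by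
    intro s hs
    refine Complex.norm_deriv_le_of_forall_mem_sphere_norm_le (by linarith)
      (diffOn_ball hF (by linarith)) fun z hz => ?_
    have hz1 := mem_RHP_of_dist (le_of_eq (mem_sphere.1 hz))
    refine (hB z (show 0 < z.re by linarith)).trans ?_
    gcongr ?_ * Real.exp ?_
    nlinarith
  set H : ℂ → ℂ := fun z => Complex.exp (a * z) * deriv F (x + z) with hH
  have hHn : ∀ z, ‖H z‖ = Real.exp (a * z.re) * ‖deriv F (x + z)‖ := by
    intro z; simp [hH, Complex.norm_exp]
  have hHb : ∀ z : ℂ, 0 ≤ z.re → ‖H z‖ ≤ B * Real.exp (-a * (x / 2)) / (x / 2) := by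
    intro z hz
    rw [hHn]
    have h1 := hder (x + z) (by simpa using hz)
    refine (mul_le_mul_of_nonneg_left h1 (Real.exp_pos _).le).trans (le_of_eq ?_)
    have : Real.exp (-a * (((x:ℂ) + z).re - x / 2)) =
      Real.exp (-a * (x / 2)) * Real.exp (-(a * z.re)) := by
      rw [← Real.exp_add]; congr 1; simp; ring
    rw [this, Real.exp_neg]
    field_simp
  have hHdiff : DiffContOnCl ℂ H {z | 0 < z.re} := by
    apply DifferentiableOn.diffContOnCl
    rw [Complex.closure_setOfPred_lt_re]
    intro z hz
    have hz' : (0:ℝ) ≤ z.re := hz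
    have h1 : DifferentiableAt ℂ (deriv F) (x + z) :=
      hdd.differentiableAt (isOpen_RHP.mem_nhds (show 0 < ((x:ℂ) + z).re by simp; linarith))
    have h2 : DifferentiableAt ℂ (fun z => deriv F (x + z)) z :=
      DifferentiableAt.comp z h1 (by fun_prop)
    have h3 : DifferentiableAt ℂ (fun z : ℂ => Complex.exp (a * z)) z := by fun_prop
    exact (h3.mul h2).differentiableWithinAt
  have hPL : ∀ z : ℂ, 0 ≤ z.re → ‖H z‖ ≤ A := by
    intro z hz
    refine PhragmenLindelof.right_half_plane_of_bounded_on_real hHdiff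
      ⟨0, by norm_num, 0, ?_⟩ ?_ ?_ hz
    · apply Asymptotics.IsBigO.of_bound (B * Real.exp (-a * (x / 2)) / (x / 2))
      rw [eventually_inf_principal]
      refine Eventually.of_forall fun w hw => ?_
      simpa using hHb w (le_of_lt hw)
    · refine isBoundedUnder_of_eventually_le (a := B * Real.exp (-a * (x / 2)) / (x / 2)) ?_
      filter_upwards [eventually_ge_atTop 0] with t ht
      exact hHb t (by simpa using ht)
    · intro t
      rw [hHn]
      simpa using hA (x + t * Complex.I) (by simp)
  have hF' : ∀ t : ℝ, x ≤ t → ‖deriv F t‖ ≤ A * Real.exp (-a * (t - x)) := by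
    intro t ht
    have h1 := hPL ((t - x : ℝ) : ℂ) (by simpa using ht)
    rw [hHn] at h1
    have h2 : (x : ℂ) + ((t - x : ℝ) : ℂ) = t := by push_cast; ring
    rw [h2, Complex.ofReal_re] at h1
    have h3 : Real.exp (-a * (t - x)) = (Real.exp (a * (t - x)))⁻¹ := by
      rw [← Real.exp_neg]; congr 1; ring
    rw [h3, ← div_eq_mul_inv, le_div_iff₀ (Real.exp_pos _)]
    linarith
  have hFT : ∀ T : ℝ, x₀ ≤ T → ‖F T - F x₀‖ ≤ A / a * Real.exp (-a * (x₀ - x)) := by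
    intro T hT
    have hmem : ∀ t : ℝ, x₀ ≤ t → (t : ℂ) ∈ RHP := fun t ht => by
      show 0 < (t : ℂ).re
      simp; linarith
    have hd : ∀ t : ℝ, x₀ ≤ t → HasDerivAt (fun t : ℝ => F t - F x₀) (deriv F t) t := by
      intro t ht
      have h1 := (hF.differentiableAt (isOpen_RHP.mem_nhds (hmem t ht))).hasDerivAt
      exact (h1.comp_ofReal).sub_const _
    have h := image_norm_le_of_norm_deriv_right_le_deriv_boundary
      (f := fun t : ℝ => F t - F x₀) (a := x₀) (b := T) (f' := fun t => deriv F t)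
      (B := fun t => A / a * (Real.exp (-a * (x₀ - x)) - Real.exp (-a * (t - x))))
      (B' := fun t => A * Real.exp (-a * (t - x)))
      (fun t ht => (hd t ht.1).continuousAt.continuousWithinAt)
      (fun t ht => (hd t ht.1).hasDerivWithinAt) (by simp)
      (fun t => by
        have h1 : HasDerivAt (fun t : ℝ => -a * (t - x)) (-a) t := by
          simpa using ((hasDerivAt_id t).sub_const x).const_mul (-a)
        have h2 := ((h1.exp.const_sub (Real.exp (-a * (x₀ - x)))).const_mul (A / a))
        refine h2.congr_deriv ?_
        have ha' : a ≠ 0 := ha.ne'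
        field_simp)
      (fun t ht => hF' t (hxx.trans ht.1)) (right_mem_Icc.2 hT)
    refine h.trans ?_
    gcongr
    linarith [Real.exp_pos (-a * (T - x))]
  have hlim : Tendsto (fun T : ℝ => F T) atTop (nhds 0) := by
    have h1 : Tendsto (fun T : ℝ => B * Real.exp (-a * T)) atTop (nhds 0) := by
      have h2 : Tendsto (fun T : ℝ => -a * T) atTop atBot :=
        tendsto_id.const_mul_atTop_of_neg (by linarith)
      simpa using (Real.tendsto_exp_atBot.comp h2).const_mul B
    refine squeeze_zero_norm' ?_ h1
    filter_upwards [eventually_gt_atTop 0] with T hT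
    simpa using hB T (by simpa [RHP] using hT)
  have hl2 := (hlim.sub_const (F x₀)).norm
  simp only [zero_sub, norm_neg] at hl2
  refine le_of_tendsto hl2 ?_
  filter_upwards [eventually_ge_atTop x₀] with T hT using hFT T hT

lemma Lsq_exp (G : ℂ → ℂ) (a x : ℝ) :
    Lsq (fun s => Complex.exp (-a * s) * G s) x = ENNReal.ofReal (Real.exp (-2 * a * x)) * Lsq G x := by
  unfold Lsq
  rw [← lintegral_const_mul' _ _ ENNReal.ofReal_ne_top]
  refine lintegral_congr fun y => ?_
  rw [enorm_mul, mul_pow, ← ofReal_norm, Complex.norm_exp, ← ENNReal.ofReal_pow (Real.exp_pos _).le,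
    ← Real.exp_nat_mul]
  congr 3
  simp
  ring

/-- The lower bound on lines. -/
lemma line_lower {v : ℂ → ℂ} (hv : DifferentiableOn ℂ v RHP) {M : ℝ} (hM : 0 ≤ M)
    (hb : ∀ x, 0 < x → Lsq v x ≤ ENNReal.ofReal M) {a x x₀ : ℝ} (ha : 0 < a) (hx : 0 < x)
    (hxx : x ≤ x₀) :
    ENNReal.ofReal (a ^ 2 * Real.exp (-2 * a * x)) * Lsq v x₀ ≤
      Lsq (deriv fun s => Complex.exp (-a * s) * v s) x := by
  set g : ℂ → ℂ := fun s => Complex.exp (-a * s) * v s with hg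
  by_cases htop : Lsq (deriv g) x = ⊤
  · rw [htop]; exact le_top
  have hx0 : 0 < x₀ := by linarith
  have hx0' : (x₀ : ℂ) ∈ RHP := by simpa [RHP] using hx0
  set Φ := (Lsq (deriv g) x).toReal with hΦ
  have hΦ0 : 0 ≤ Φ := ENNReal.toReal_nonneg
  have hΦe : Lsq (deriv g) x = ENNReal.ofReal Φ := (ENNReal.ofReal_toReal htop).symm
  have hgd : DifferentiableOn ℂ g RHP := by
    apply DifferentiableOn.mul _ hv
    fun_prop
  have hdc : ContinuousOn (deriv g) RHP := (hgd.deriv isOpen_RHP).continuousOn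
  have key : Lsq g x₀ ≤ ENNReal.ofReal (Φ / a ^ 2 * Real.exp (-2 * a * (x₀ - x))) := by
    refine Lsq_le_of_trunc hgd.continuousOn hx0 fun R hR => ?_
    have hcl := continuous_line hgd.continuousOn hx0'
    set ψ : ℝ → ℂ := fun y => (starRingEnd ℂ) (g ((x₀ : ℂ) + (y : ℂ) * Complex.I)) with hψd
    have hψ : Continuous ψ := Complex.continuous_conj.comp hcl
    set J := ∫ y in (-R)..R, ‖g ((x₀ : ℂ) + (y : ℂ) * Complex.I)‖ ^ 2 with hJ
    have hJ0 : 0 ≤ J := intervalIntegral.integral_nonneg (by linarith) (fun _ _ => by positivity)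
    have hJψ : ∫ y in (-R)..R, ‖ψ y‖ ^ 2 = J := by
      refine intervalIntegral.integral_congr fun y _ => ?_
      simp [hψd]
    set F : ℂ → ℂ := fun s => ∫ y in (-R)..R, g (s + (y : ℂ) * Complex.I) * ψ y with hF
    have hFd : DifferentiableOn ℂ F RHP := fun s hs =>
      (dual_hasDerivAt hgd hψ R hs).differentiableAt.differentiableWithinAt
    have h1 : F x₀ = (J : ℂ) :=
      conj_mul_int (g := fun y : ℝ => g ((x₀ : ℂ) + (y : ℂ) * Complex.I)) R
    have h2 := scalar_est hFd (a := a) (x := x) (x₀ := x₀) (A := Real.sqrt Φ * Real.sqrt J)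
      (B := Real.sqrt M * Real.sqrt J) ha hx hxx
      (fun s hs => by
        have hb' : Lsq g s.re ≤ ENNReal.ofReal (Real.exp (-2 * a * s.re) * M) := by
          rw [hg, Lsq_exp, ENNReal.ofReal_mul (Real.exp_pos _).le]
          gcongr
          exact hb _ hs
        have := dual_bound hgd.continuousOn hψ hR hs (by positivity) hb'
        rw [hJψ, Real.sqrt_mul (Real.exp_pos _).le] at this
        have h3 : Real.sqrt (Real.exp (-2 * a * s.re)) = Real.exp (-a * s.re) := by
          rw [Real.sqrt_eq_iff_mul_self_eq_of_pos (Real.exp_pos _), ← Real.exp_add]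
          congr 1; ring
        rw [h3] at this
        calc _ ≤ _ := this
          _ = _ := by ring)
      (fun s hs => by
        have hs0 : s ∈ RHP := by show 0 < s.re; rw [hs]; exact hx
        rw [(dual_hasDerivAt hgd hψ R hs0).deriv, ← hJψ]
        exact dual_bound hdc hψ hR hs0 hΦ0 (by rw [hs, hΦe]))
    rw [h1, Complex.norm_real, Real.norm_of_nonneg hJ0] at h2
    have h3 := Real.sq_sqrt hJ0
    have h4 := Real.sq_sqrt hΦ0
    have h6 : Real.exp (-2 * a * (x₀ - x)) = Real.exp (-a * (x₀ - x)) ^ 2 := by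
      rw [← Real.exp_nat_mul]; congr 1; push_cast; ring
    rcases hJ0.eq_or_lt with h | h
    · rw [← h]; positivity
    · have h5 : J ^ 2 ≤ (Real.sqrt Φ * Real.sqrt J / a * Real.exp (-a * (x₀ - x))) ^ 2 := by gcongr
      have h7 : (Real.sqrt Φ * Real.sqrt J / a * Real.exp (-a * (x₀ - x))) ^ 2
          = (Φ / a ^ 2 * Real.exp (-2 * a * (x₀ - x))) * J := by
        rw [h6, mul_pow, div_pow, mul_pow, h3, h4]; ring
      rw [h7] at h5
      nlinarith
  rw [hg, Lsq_exp] at key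
  rw [hΦe]
  calc ENNReal.ofReal (a ^ 2 * Real.exp (-2 * a * x)) * Lsq v x₀
      = ENNReal.ofReal (a ^ 2 * Real.exp (2 * a * (x₀ - x))) *
        (ENNReal.ofReal (Real.exp (-2 * a * x₀)) * Lsq v x₀) := by
        have h8 : Real.exp (-2 * a * x) =
            Real.exp (2 * a * (x₀ - x)) * Real.exp (-2 * a * x₀) := by
          rw [← Real.exp_add]; congr 1; ring
        rw [← mul_assoc, ← ENNReal.ofReal_mul (by positivity), h8]
        congr 2
        ring
    _ ≤ ENNReal.ofReal (a ^ 2 * Real.exp (2 * a * (x₀ - x))) *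
        ENNReal.ofReal (Φ / a ^ 2 * Real.exp (-2 * a * (x₀ - x))) := by gcongr
    _ = ENNReal.ofReal Φ := by
        rw [← ENNReal.ofReal_mul (by positivity)]
        congr 1
        have : Real.exp (2 * a * (x₀ - x)) * Real.exp (-2 * a * (x₀ - x)) = 1 := by
          rw [← Real.exp_add, ← Real.exp_zero]; congr 1; ring
        calc a ^ 2 * Real.exp (2 * a * (x₀ - x)) * (Φ / a ^ 2 * Real.exp (-2 * a * (x₀ - x)))
            = (a ^ 2 / a ^ 2) * Φ *
              (Real.exp (2 * a * (x₀ - x)) * Real.exp (-2 * a * (x₀ - x))) := by ring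
          _ = Φ := by rw [this, div_self (by positivity)]; ring

/-- Dirichlet integral over the half-plane. -/
def DL (g : ℂ → ℂ) : ENNReal := ∫⁻ s in RHP, ‖deriv g s‖ₑ ^ 2

lemma one_add_ne {z : ℂ} (hz : z ∈ unitDisc) : 1 + z ≠ 0 := by
  intro h
  have h1 : z = -1 := by linear_combination h
  rw [h1] at hz
  simp [unitDisc] at hz

lemma one_add_ne' {s : ℂ} (hs : s ∈ RHP) : 1 + s ≠ 0 := by
  intro h
  have h1 : s = -1 := by linear_combination h
  rw [h1] at hs
  simp [RHP] at hs
  linarith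

lemma Mmap_Mmap {z : ℂ} (hz : 1 + z ≠ 0) : Mmap (Mmap z) = z := by
  unfold Mmap
  have h1 : 1 + (1 - z) / (1 + z) = 2 / (1 + z) := by field_simp; ring
  have h2 : 1 - (1 - z) / (1 + z) = 2 * z / (1 + z) := by field_simp; ring
  rw [h1, h2]
  field_simp

lemma Mmap_mem {z : ℂ} (hz : z ∈ unitDisc) : Mmap z ∈ RHP := by
  have h0 := one_add_ne hz
  have hz1 : Complex.normSq z < 1 := by
    have : ‖z‖ < 1 := by simpa [unitDisc] using hz
    rw [Complex.normSq_eq_norm_sq]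
    nlinarith [norm_nonneg z]
  show 0 < (Mmap z).re
  unfold Mmap
  rw [Complex.div_re, ← add_div]
  apply div_pos _ (Complex.normSq_pos.2 h0)
  rw [Complex.normSq_apply] at hz1
  simp
  nlinarith

lemma Mmap_mem' {s : ℂ} (hs : s ∈ RHP) : Mmap s ∈ unitDisc := by
  have h0 := one_add_ne' hs
  have hs' : 0 < s.re := hs
  show Mmap s ∈ ball 0 1
  rw [mem_ball_zero_iff]
  unfold Mmap
  rw [norm_div, div_lt_one (norm_pos_iff.2 h0)]
  refine lt_of_pow_lt_pow_left₀ 2 (norm_nonneg _) ?_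
  rw [← Complex.normSq_eq_norm_sq, ← Complex.normSq_eq_norm_sq, Complex.normSq_apply,
    Complex.normSq_apply]
  simp
  nlinarith

lemma Mmap_image : Mmap '' unitDisc = RHP := by
  ext s
  constructor
  · rintro ⟨z, hz, rfl⟩; exact Mmap_mem hz
  · intro hs
    exact ⟨Mmap s, Mmap_mem' hs, Mmap_Mmap (one_add_ne' hs)⟩

lemma Mmap_injOn : InjOn Mmap unitDisc := by
  intro z hz w hw h
  rw [← Mmap_Mmap (one_add_ne hz), h, Mmap_Mmap (one_add_ne hw)]

lemma Mmap_diff {z : ℂ} (hz : z ∈ unitDisc) : DifferentiableAt ℂ Mmap z := by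
  unfold Mmap
  have h0 := one_add_ne hz
  exact DifferentiableAt.div (by fun_prop) (by fun_prop) h0

lemma det_smulRight (w : ℂ) :
    ((ContinuousLinearMap.toSpanSingleton ℂ w).restrictScalars ℝ).det = ‖w‖ ^ 2 := by
  have h := LinearMap.det_restrictScalars (R := ℝ) (S := ℂ) (A := ℂ)
    (f := (ContinuousLinearMap.toSpanSingleton ℂ w : ℂ →ₗ[ℂ] ℂ))
  have h2 : LinearMap.det (ContinuousLinearMap.toSpanSingleton ℂ w : ℂ →ₗ[ℂ] ℂ) = w := by
    rw [LinearMap.det_ring]; simp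
  rw [h2, Algebra.norm_complex_apply] at h
  rw [← Complex.normSq_eq_norm_sq]
  exact h

lemma DL_eq {g : ℂ → ℂ} (hg : DifferentiableOn ℂ g RHP) :
    DL g = ∫⁻ z in unitDisc, ‖deriv (fun z => g (Mmap z)) z‖ₑ ^ 2 := by
  unfold DL
  have hm : MeasurableSet unitDisc := measurableSet_ball
  rw [← Mmap_image, lintegral_image_eq_lintegral_abs_det_fderiv_mul volume hm
    (f' := fun z => (ContinuousLinearMap.toSpanSingleton ℂ (deriv Mmap z)).restrictScalars ℝ)
    (fun z hz => ((Mmap_diff hz).hasDerivAt.hasFDerivAt.restrictScalars ℝ).hasFDerivWithinAt)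
    Mmap_injOn]
  refine setLIntegral_congr_fun hm fun z hz => ?_
  have h1 : deriv (fun z => g (Mmap z)) z = deriv g (Mmap z) * deriv Mmap z :=
    ((hg.differentiableAt (isOpen_RHP.mem_nhds (Mmap_mem hz))).hasDerivAt.comp z
      (Mmap_diff hz).hasDerivAt).deriv
  simp only [h1, det_smulRight]
  rw [abs_of_nonneg (by positivity), ENNReal.ofReal_pow (norm_nonneg _), ofReal_norm, enorm_mul,
    mul_pow, mul_comm]

lemma memDir_iff {g : ℂ → ℂ} (hg : DifferentiableOn ℂ g RHP) :
    MemHpDirichlet g ↔ DL g < ⊤ := by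
  have h1 : DifferentiableOn ℂ (fun z => g (Mmap z)) unitDisc := fun z hz =>
    ((hg.differentiableAt (isOpen_RHP.mem_nhds (Mmap_mem hz))).comp z
      (Mmap_diff hz)).differentiableWithinAt
  have hm : Measurable fun z => ‖deriv (fun z => g (Mmap z)) z‖ ^ 2 :=
    (measurable_deriv _).norm.pow_const 2
  rw [DL_eq hg]
  have h2 : ∫⁻ z in unitDisc, ‖deriv (fun z => g (Mmap z)) z‖ₑ ^ 2 =
      ∫⁻ z in unitDisc, ‖‖deriv (fun z => g (Mmap z)) z‖ ^ 2‖ₑ := by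
    refine lintegral_congr fun z => ?_
    simp
  rw [h2]
  constructor
  · intro h
    exact h.2.2.2
  · intro h
    exact ⟨hg, h1, hm.aestronglyMeasurable, h⟩

lemma hpDir_eq {g : ℂ → ℂ} (hg : DifferentiableOn ℂ g RHP) :
    hpDirNormSq g = ‖g 1‖ ^ 2 + (1 / Real.pi) * (DL g).toReal := by
  unfold hpDirNormSq dirNormSq
  have h0 : Mmap 0 = 1 := by simp [Mmap]
  have hm : Measurable fun z => ‖deriv (fun z => g (Mmap z)) z‖ ^ 2 :=
    (measurable_deriv _).norm.pow_const 2
  beta_reduce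
  rw [h0, DL_eq hg, integral_eq_lintegral_of_nonneg_ae (Eventually.of_forall fun z => by positivity)
    hm.aestronglyMeasurable]
  congr 3
  refine lintegral_congr fun z => ?_
  rw [ENNReal.ofReal_pow (norm_nonneg _), ofReal_norm]

lemma DL_lines (g : ℂ → ℂ) : DL g = ∫⁻ x in Ioi (0:ℝ), Lsq (deriv g) x := by
  unfold DL Lsq
  have hm : Measurable fun s => ‖deriv g s‖ₑ ^ 2 := (measurable_deriv g).enorm.pow_const 2
  rw [← lintegral_indicator isOpen_RHP.measurableSet, ← lintegral_indicator measurableSet_Ioi,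
    ← Complex.volume_preserving_equiv_real_prod.symm.lintegral_comp_emb
      Complex.measurableEquivRealProd.symm.measurableEmbedding, Measure.volume_eq_prod,
    lintegral_prod]
  · refine lintegral_congr fun x => ?_
    by_cases hx : x ∈ Ioi (0:ℝ)
    · rw [indicator_of_mem hx]
      refine lintegral_congr fun y => ?_
      have : Complex.measurableEquivRealProd.symm (x, y) = (x : ℂ) + (y : ℂ) * Complex.I := by
        apply Complex.ext <;> simp [Complex.measurableEquivRealProd]
      rw [this, indicator_of_mem]
      simpa [RHP] using hx
    · rw [indicator_of_notMem hx]
      have : ∀ y : ℝ, RHP.indicator (fun s => ‖deriv g s‖ₑ ^ 2)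
          (Complex.measurableEquivRealProd.symm (x, y)) = 0 := by
        intro y
        apply indicator_of_notMem
        simpa [RHP, Complex.measurableEquivRealProd] using hx
      rw [lintegral_congr this]
      simp
  · exact ((hm.indicator isOpen_RHP.measurableSet).comp
      Complex.measurableEquivRealProd.symm.measurable).aemeasurable

lemma lint_exp {a : ℝ} (ha : 0 < a) :
    ∫⁻ x in Ioi (0:ℝ), ENNReal.ofReal (Real.exp (-2 * a * x)) = ENNReal.ofReal (1 / (2 * a)) := by
  have h := integral_exp_mul_Ioi (a := -2 * a) (by linarith) 0
  rw [← ofReal_integral_eq_lintegral_ofReal (integrableOn_exp_mul_Ioi (by linarith) 0)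
    (Eventually.of_forall fun x => (Real.exp_pos _).le), h]
  congr 1
  simp

lemma lint_exp' {a x₀ : ℝ} (ha : 0 < a) (hx : 0 < x₀) :
    ∫⁻ x in Ioc (0:ℝ) x₀, ENNReal.ofReal (Real.exp (-2 * a * x)) =
      ENNReal.ofReal ((1 - Real.exp (-2 * a * x₀)) / (2 * a)) := by
  have hc : Continuous fun x : ℝ => Real.exp (-2 * a * x) := by fun_prop
  rw [← ofReal_integral_eq_lintegral_ofReal (hc.intervalIntegrable 0 x₀).1
    (Eventually.of_forall fun x => (Real.exp_pos _).le),
    ← intervalIntegral.integral_of_le hx.le]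
  congr 1
  rw [intervalIntegral.integral_comp_mul_left (fun x => Real.exp x) (by linarith : -2 * a ≠ 0),
    integral_exp]
  simp
  field_simp
  ring

lemma DL_lower {v : ℂ → ℂ} (hv : DifferentiableOn ℂ v RHP) {M : ℝ} (hM : 0 ≤ M)
    (hb : ∀ x, 0 < x → Lsq v x ≤ ENNReal.ofReal M) {a x₀ : ℝ} (ha : 0 < a) (hx : 0 < x₀) :
    ENNReal.ofReal (a / 2 * (1 - Real.exp (-2 * a * x₀))) * Lsq v x₀ ≤
      DL (fun s => Complex.exp (-a * s) * v s) := by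
  rw [DL_lines]
  calc _ = ∫⁻ x in Ioc (0:ℝ) x₀, ENNReal.ofReal (a ^ 2 * Real.exp (-2 * a * x)) * Lsq v x₀ := by
        rw [lintegral_mul_const _ (by fun_prop)]
        congr 1
        simp_rw [ENNReal.ofReal_mul (sq_nonneg a)]
        rw [lintegral_const_mul' _ _ ENNReal.ofReal_ne_top, lint_exp' ha hx,
          ← ENNReal.ofReal_mul (sq_nonneg a)]
        congr 1
        field_simp
    _ ≤ ∫⁻ x in Ioc (0:ℝ) x₀, Lsq (deriv fun s => Complex.exp (-a * s) * v s) x := by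
        refine setLIntegral_mono' measurableSet_Ioc fun x hx' => ?_
        exact line_lower hv hM hb ha hx'.1 hx'.2
    _ ≤ _ := lintegral_mono_set Ioc_subset_Ioi_self

lemma DL_upper {u : ℂ → ℂ} (hu : DifferentiableOn ℂ u RHP) {N K : ℝ} (hN : 0 ≤ N) (hK : 0 ≤ K)
    (hb : ∀ x, 0 < x → Lsq u x ≤ ENNReal.ofReal N)
    (hb' : ∀ x, 0 < x → Lsq (deriv u) x ≤ ENNReal.ofReal K) {a : ℝ} (ha : 0 < a) :
    DL (fun s => Complex.exp (-a * s) * u s) ≤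
      ENNReal.ofReal (((1 + a) * K + (1 + 1 / a) * a ^ 2 * N) / (2 * a)) := by
  rw [DL_lines]
  have hder : ∀ s ∈ RHP, deriv (fun s => Complex.exp (-a * s) * u s) s =
      Complex.exp (-a * s) * (deriv u s - a * u s) := by
    intro s hs
    have h1 := (hu.differentiableAt (isOpen_RHP.mem_nhds hs)).hasDerivAt
    have h2 : HasDerivAt (fun s : ℂ => Complex.exp (-a * s)) (Complex.exp (-a * s) * (-a)) s := by
      have := ((hasDerivAt_id s).const_mul (-a : ℂ)).cexp
      simpa using this
    have h3 := (h2.mul h1).deriv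
    simp only [Pi.mul_def] at h3
    rw [h3]
    ring
  have hline : ∀ x : ℝ, 0 < x → Lsq (deriv fun s => Complex.exp (-a * s) * u s) x ≤
      ENNReal.ofReal (Real.exp (-2 * a * x)) *
        ENNReal.ofReal ((1 + a) * K + (1 + 1 / a) * a ^ 2 * N) := by
    intro x hx
    have hx' : (x : ℂ) ∈ RHP := by simpa [RHP] using hx
    have h1 : Lsq (deriv fun s => Complex.exp (-a * s) * u s) x =
        Lsq (fun s => Complex.exp (-a * s) * (deriv u s - a * u s)) x := by
      unfold Lsq
      refine lintegral_congr fun y => ?_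
      rw [hder _ (add_mul_I_mem hx' y)]
    rw [h1, Lsq_exp]
    gcongr
    have hmeas : Measurable fun y : ℝ => ‖u ((x : ℂ) + (y : ℂ) * Complex.I)‖ₑ ^ 2 :=
      (continuous_line hu.continuousOn hx').enorm.measurable.pow_const 2
    calc Lsq (fun s => deriv u s - a * u s) x
        ≤ ∫⁻ y : ℝ, (ENNReal.ofReal (1 + a) * ‖deriv u ((x : ℂ) + (y : ℂ) * Complex.I)‖ₑ ^ 2 +
          ENNReal.ofReal ((1 + 1 / a) * a ^ 2) * ‖u ((x : ℂ) + (y : ℂ) * Complex.I)‖ₑ ^ 2) := by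
          unfold Lsq
          refine lintegral_mono fun y => ?_
          simp only [← ofReal_norm]
          rw [← ENNReal.ofReal_pow (norm_nonneg _), ← ENNReal.ofReal_pow (norm_nonneg _),
            ← ENNReal.ofReal_pow (norm_nonneg _), ← ENNReal.ofReal_mul (by positivity),
            ← ENNReal.ofReal_mul (by positivity), ← ENNReal.ofReal_add (by positivity)
            (by positivity)]
          apply ENNReal.ofReal_le_ofReal
          set p := deriv u ((x : ℂ) + (y : ℂ) * Complex.I)
          set q := u ((x : ℂ) + (y : ℂ) * Complex.I)
          have h3 : ‖p - a * q‖ ≤ ‖p‖ + a * ‖q‖ := by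
            refine (norm_sub_le _ _).trans ?_
            rw [norm_mul, Complex.norm_real, Real.norm_of_nonneg ha.le]
          have h4 : ‖p - a * q‖ ^ 2 ≤ (‖p‖ + a * ‖q‖) ^ 2 := by gcongr
          refine h4.trans ?_
          have h5 : (1 + 1 / a) * a ^ 2 = a ^ 2 + a := by field_simp
          rw [h5]
          nlinarith [mul_nonneg ha.le (sq_nonneg (‖p‖ - ‖q‖))]
      _ = ENNReal.ofReal (1 + a) * Lsq (deriv u) x +
          ENNReal.ofReal ((1 + 1 / a) * a ^ 2) * Lsq u x := by
          rw [lintegral_add_right _ (hmeas.const_mul _),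
            lintegral_const_mul' _ _ ENNReal.ofReal_ne_top,
            lintegral_const_mul' _ _ ENNReal.ofReal_ne_top]
          rfl
      _ ≤ ENNReal.ofReal (1 + a) * ENNReal.ofReal K +
          ENNReal.ofReal ((1 + 1 / a) * a ^ 2) * ENNReal.ofReal N := by
          gcongr
          · exact hb' x hx
          · exact hb x hx
      _ = _ := by
          rw [← ENNReal.ofReal_mul (by positivity), ← ENNReal.ofReal_mul (by positivity),
            ← ENNReal.ofReal_add (by positivity) (by positivity)]
  refine (setLIntegral_mono' measurableSet_Ioi fun x hx => hline x hx).trans ?_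
  rw [lintegral_mul_const _ (by fun_prop), lint_exp ha, ← ENNReal.ofReal_mul (by positivity)]
  apply le_of_eq
  congr 1
  ring

lemma hardy_nonneg (f : ℂ → ℂ) : 0 ≤ hpHardyNormSq f :=
  Real.iSup_nonneg fun _ => integral_nonneg fun _ => by positivity

lemma H2_Lsq_le {f : ℂ → ℂ} (hf : f ∈ H2Space) {x : ℝ} (hx : 0 < x) :
    Lsq f x ≤ ENNReal.ofReal (hpHardyNormSq f) := by
  obtain ⟨⟨_, hi, M, hM⟩, _⟩ := hf
  have h1 : (∫ y : ℝ, ‖f ((x : ℂ) + (y : ℂ) * Complex.I)‖ ^ 2) ≤ hpHardyNormSq f := by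
    refine le_ciSup (f := fun x : {x : ℝ // 0 < x} =>
      ∫ y : ℝ, ‖f (((x : ℝ) : ℂ) + (y : ℂ) * Complex.I)‖ ^ 2) ⟨M, ?_⟩ ⟨x, hx⟩
    rintro _ ⟨t, rfl⟩
    exact hM t.1 t.2
  refine le_trans (le_of_eq ?_) (ENNReal.ofReal_le_ofReal h1)
  rw [ofReal_integral_eq_lintegral_ofReal (hi x hx) (Eventually.of_forall fun y => by positivity)]
  refine lintegral_congr fun y => ?_
  rw [ENNReal.ofReal_pow (norm_nonneg _), ofReal_norm]

lemma H2_of_Lsq {f : ℂ → ℂ} (hf : DifferentiableOn ℂ f RHP) (h0 : ∀ s, s ∉ RHP → f s = 0) {N : ℝ}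
    (hN : 0 ≤ N) (hb : ∀ x, 0 < x → Lsq f x ≤ ENNReal.ofReal N) :
    f ∈ H2Space ∧ hpHardyNormSq f ≤ N := by
  have hm : ∀ x : ℝ, 0 < x → Continuous fun y : ℝ => ‖f ((x : ℂ) + (y : ℂ) * Complex.I)‖ ^ 2 :=
    fun x hx => (continuous_line hf.continuousOn
      (show (x : ℂ) ∈ RHP by simpa [RHP] using hx)).norm.pow 2
  have hle : ∀ x : ℝ, 0 < x → (∫ y : ℝ, ‖f ((x : ℂ) + (y : ℂ) * Complex.I)‖ ^ 2) ≤ N := by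
    intro x hx
    rw [integral_eq_lintegral_of_nonneg_ae (Eventually.of_forall fun y => by positivity)
      (hm x hx).aestronglyMeasurable]
    refine ENNReal.toReal_le_of_le_ofReal hN (le_trans (le_of_eq ?_) (hb x hx))
    refine lintegral_congr fun y => ?_
    rw [ENNReal.ofReal_pow (norm_nonneg _), ofReal_norm]
  refine ⟨⟨⟨hf, fun x hx => ⟨(hm x hx).aestronglyMeasurable, ?_⟩, N, hle⟩, h0⟩, ?_⟩
  · refine lt_of_le_of_lt (le_trans (le_of_eq ?_) (hb x hx)) ENNReal.ofReal_lt_top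
    refine lintegral_congr fun y => ?_
    simp
  · haveI : Nonempty {x : ℝ // 0 < x} := ⟨⟨1, one_pos⟩⟩
    exact ciSup_le fun x => hle x.1 x.2

lemma norm_sub_mul_sq (p q l : ℂ) : ‖p - l * q‖ ^ 2 ≤ 2 * ‖p‖ ^ 2 + 2 * ‖l‖ ^ 2 * ‖q‖ ^ 2 := by
  have h1 : ‖p - l * q‖ ≤ ‖p‖ + ‖l‖ * ‖q‖ := (norm_sub_le _ _).trans (by rw [norm_mul])
  have h2 : ‖p - l * q‖ ^ 2 ≤ (‖p‖ + ‖l‖ * ‖q‖) ^ 2 := by gcongr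
  nlinarith [sq_nonneg (‖p‖ - ‖l‖ * ‖q‖)]

lemma enorm_sub_mul_sq (p q l : ℂ) : ‖p - l * q‖ₑ ^ 2 ≤
    2 * ‖p‖ₑ ^ 2 + ENNReal.ofReal (2 * ‖l‖ ^ 2) * ‖q‖ₑ ^ 2 := by
  have h2 : (2 : ENNReal) = ENNReal.ofReal 2 := by simp
  simp only [← ofReal_norm]
  rw [h2, ← ENNReal.ofReal_pow (norm_nonneg _), ← ENNReal.ofReal_pow (norm_nonneg _),
    ← ENNReal.ofReal_pow (norm_nonneg _), ← ENNReal.ofReal_mul (by positivity),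
    ← ENNReal.ofReal_mul (by positivity), ← ENNReal.ofReal_add (by positivity) (by positivity)]
  exact ENNReal.ofReal_le_ofReal (norm_sub_mul_sq p q l)

lemma H2_sub {f g : ℂ → ℂ} (hf : f ∈ H2Space) (hg : g ∈ H2Space) (l : ℂ) :
    (fun s => f s - l * g s) ∈ H2Space := by
  have hfn := hardy_nonneg f
  have hgn := hardy_nonneg g
  refine (H2_of_Lsq (N := 2 * hpHardyNormSq f + 2 * ‖l‖ ^ 2 * hpHardyNormSq g)
    (hf.1.1.sub (hg.1.1.const_mul l)) ?_ (by positivity) ?_).1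
  · intro s hs
    simp [hf.2 s hs, hg.2 s hs]
  · intro x hx
    have hx' : (x : ℂ) ∈ RHP := by simpa [RHP] using hx
    have hmeas : Measurable fun y : ℝ => ‖g ((x : ℂ) + (y : ℂ) * Complex.I)‖ₑ ^ 2 :=
      (continuous_line hg.1.1.continuousOn hx').enorm.measurable.pow_const 2
    calc Lsq (fun s => f s - l * g s) x
        ≤ ∫⁻ y : ℝ, (2 * ‖f ((x : ℂ) + (y : ℂ) * Complex.I)‖ₑ ^ 2 +
          ENNReal.ofReal (2 * ‖l‖ ^ 2) * ‖g ((x : ℂ) + (y : ℂ) * Complex.I)‖ₑ ^ 2) :=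
          lintegral_mono fun y => enorm_sub_mul_sq _ _ _
      _ = 2 * Lsq f x + ENNReal.ofReal (2 * ‖l‖ ^ 2) * Lsq g x := by
          rw [lintegral_add_right _ (hmeas.const_mul _),
            lintegral_const_mul' _ _ (by simp),
            lintegral_const_mul' _ _ ENNReal.ofReal_ne_top]
          rfl
      _ ≤ ENNReal.ofReal 2 * ENNReal.ofReal (hpHardyNormSq f) +
          ENNReal.ofReal (2 * ‖l‖ ^ 2) * ENNReal.ofReal (hpHardyNormSq g) := by
          have h2 : (2 : ENNReal) = ENNReal.ofReal 2 := by simp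
          rw [h2]
          gcongr
          · exact H2_Lsq_le hf hx
          · exact H2_Lsq_le hg hx
      _ = _ := by
          rw [← ENNReal.ofReal_mul (by positivity), ← ENNReal.ofReal_mul (by positivity),
            ← ENNReal.ofReal_add (by positivity) (by positivity)]

lemma hpDir_nonneg (g : ℂ → ℂ) : 0 ≤ hpDirNormSq g := by
  unfold hpDirNormSq dirNormSq
  have : 0 ≤ ∫ z in unitDisc, ‖deriv (fun z => g (Mmap z)) z‖ ^ 2 :=
    integral_nonneg fun z => by positivity
  have := Real.pi_pos
  positivity

lemma DC_sub {f g : ℂ → ℂ} (hf : f ∈ DCSpace) (hg : g ∈ DCSpace) (l : ℂ) :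
    (fun s => f s - l * g s) ∈ DCSpace ∧
    hpDirNormSq (fun s => f s - l * g s) ≤
      2 * hpDirNormSq f + 2 * ‖l‖ ^ 2 * hpDirNormSq g := by
  have hfd := hf.1.1
  have hgd := hg.1.1
  have hd : DifferentiableOn ℂ (fun s => f s - l * g s) RHP := hfd.sub (hgd.const_mul l)
  have hfl := (memDir_iff hfd).1 hf.1
  have hgl := (memDir_iff hgd).1 hg.1
  have hDL : DL (fun s => f s - l * g s) ≤ 2 * DL f + ENNReal.ofReal (2 * ‖l‖ ^ 2) * DL g := by
    have hmeas : Measurable fun s : ℂ => ‖deriv g s‖ₑ ^ 2 :=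
      (measurable_deriv g).enorm.pow_const 2
    calc DL (fun s => f s - l * g s)
        ≤ ∫⁻ s in RHP, (2 * ‖deriv f s‖ₑ ^ 2 +
          ENNReal.ofReal (2 * ‖l‖ ^ 2) * ‖deriv g s‖ₑ ^ 2) := by
          refine setLIntegral_mono' isOpen_RHP.measurableSet fun s hs => ?_
          have h1 := (hfd.differentiableAt (isOpen_RHP.mem_nhds hs)).hasDerivAt
          have h2 := (hgd.differentiableAt (isOpen_RHP.mem_nhds hs)).hasDerivAt
          have h3 : HasDerivAt (fun s => f s - l * g s) (deriv f s - l * deriv g s) s :=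
            h1.sub (h2.const_mul l)
          rw [h3.deriv]
          exact enorm_sub_mul_sq _ _ _
      _ = _ := by
          rw [lintegral_add_right _ (hmeas.const_mul _),
            lintegral_const_mul' _ _ (by simp),
            lintegral_const_mul' _ _ ENNReal.ofReal_ne_top]
          rfl
  have hfin : 2 * DL f + ENNReal.ofReal (2 * ‖l‖ ^ 2) * DL g < ⊤ :=
    ENNReal.add_lt_top.2 ⟨ENNReal.mul_lt_top (by simp) hfl,
      ENNReal.mul_lt_top ENNReal.ofReal_lt_top hgl⟩
  refine ⟨⟨(memDir_iff hd).2 (hDL.trans_lt hfin), fun s hs => by simp [hf.2 s hs, hg.2 s hs]⟩, ?_⟩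
  rw [hpDir_eq hd, hpDir_eq hfd, hpDir_eq hgd]
  have h1 := norm_sub_mul_sq (f 1) (g 1) l
  have h2 : (DL (fun s => f s - l * g s)).toReal ≤
      2 * (DL f).toReal + 2 * ‖l‖ ^ 2 * (DL g).toReal := by
    have h3 := ENNReal.toReal_mono hfin.ne hDL
    rw [ENNReal.toReal_add (ENNReal.mul_lt_top (by simp) hfl).ne
      (ENNReal.mul_lt_top ENNReal.ofReal_lt_top hgl).ne, ENNReal.toReal_mul, ENNReal.toReal_mul,
      ENNReal.toReal_ofReal (by positivity)] at h3
    simpa using h3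
  have hpi : 0 < 1 / Real.pi := by have := Real.pi_pos; positivity
  have h4 := mul_le_mul_of_nonneg_left h2 hpi.le
  linarith

lemma step_one {T : (ℂ → ℂ) → ℂ → ℂ} {C : ℝ} (hC : 0 ≤ C) {a : ℕ → ℝ} (ha : ∀ m, 0 < a m)
    (hat : Tendsto a atTop atTop)
    (hH : ∀ f ∈ H2Space, T f ∈ H2Space)
    (hD : ∀ g ∈ DCSpace, T g ∈ DCSpace ∧ hpDirNormSq (T g) ≤ C * hpDirNormSq g)
    (hcom : ∀ m f, T (fun s => Complex.exp (-a m * s) * f s) =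
      fun s => Complex.exp (-a m * s) * T f s)
    {u : ℂ → ℂ} (hu : u ∈ H2Space) {N K : ℝ} (hN : 0 ≤ N) (hK : 0 ≤ K)
    (hb : ∀ x, 0 < x → Lsq u x ≤ ENNReal.ofReal N)
    (hb' : ∀ x, 0 < x → Lsq (deriv u) x ≤ ENNReal.ofReal K) {x₀ : ℝ} (hx : 0 < x₀) :
    Lsq (T u) x₀ ≤ ENNReal.ofReal (C * N) := by
  set v := T u with hv
  have hvH : v ∈ H2Space := hH u hu
  have hvd := hvH.1.1
  have hud := hu.1.1
  have hLv : ∀ x, 0 < x → Lsq v x ≤ ENNReal.ofReal (hpHardyNormSq v) := fun x hx => H2_Lsq_le hvH hx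
  have hLfin : Lsq v x₀ ≠ ⊤ := ((hLv x₀ hx).trans_lt ENNReal.ofReal_lt_top).ne
  set L := (Lsq v x₀).toReal with hL
  have hL0 : 0 ≤ L := ENNReal.toReal_nonneg
  have hpi := Real.pi_pos
  have key : ∀ m, (1 - Real.exp (-2 * a m * x₀)) * L ≤
      C * (2 * Real.pi * (a m)⁻¹ * Real.exp (-2 * a m) * ‖u 1‖ ^ 2 +
        (((a m)⁻¹ ^ 2 + (a m)⁻¹) * K + (1 + (a m)⁻¹) * N)) := by
    intro m
    set α := a m with hα
    have hα0 : 0 < α := ha m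
    set g : ℂ → ℂ := fun s => Complex.exp (-α * s) * u s with hg
    have hexp : DifferentiableOn ℂ (fun s : ℂ => Complex.exp (-α * s)) RHP := by fun_prop
    have hgd : DifferentiableOn ℂ g RHP := hexp.mul hud
    have hgv : DifferentiableOn ℂ (fun s => Complex.exp (-α * s) * v s) RHP := hexp.mul hvd
    have hup := DL_upper hud hN hK hb hb' hα0
    have hgD : g ∈ DCSpace := ⟨(memDir_iff hgd).2 (hup.trans_lt ENNReal.ofReal_lt_top),
      fun s hs => by simp [hg, hu.2 s hs]⟩
    obtain ⟨h1, h2⟩ := hD g hgD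
    rw [hg, hcom m u] at h1 h2
    change (fun s => Complex.exp (-α * s) * v s) ∈ DCSpace at h1
    change hpDirNormSq (fun s => Complex.exp (-α * s) * v s) ≤ C * hpDirNormSq g at h2
    have hfin := (memDir_iff hgv).1 h1.1
    have hlow := DL_lower hvd (hardy_nonneg v) hLv hα0 hx
    have hlow' := ENNReal.toReal_mono hfin.ne hlow
    have hle1 : Real.exp (-2 * α * x₀) ≤ 1 := by
      rw [Real.exp_le_one_iff]; nlinarith [mul_pos hα0 hx]
    rw [ENNReal.toReal_mul, ENNReal.toReal_ofReal
      (mul_nonneg (by positivity) (by linarith)), ← hL] at hlow'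
    rw [hpDir_eq hgv, hpDir_eq hgd] at h2
    have hup' := ENNReal.toReal_le_of_le_ofReal (by positivity) hup
    have hg1 : ‖g 1‖ ^ 2 = Real.exp (-2 * α) * ‖u 1‖ ^ 2 := by
      simp only [hg, norm_mul, Complex.norm_exp, mul_pow]
      rw [← Real.exp_nat_mul]
      congr 2
      simp
    rw [hg1] at h2
    have h3 : 1 / Real.pi * (α / 2 * (1 - Real.exp (-2 * α * x₀)) * L) ≤
        C * (Real.exp (-2 * α) * ‖u 1‖ ^ 2 + 1 / Real.pi *
          (((1 + α) * K + (1 + 1 / α) * α ^ 2 * N) / (2 * α))) := by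
      calc _ ≤ 1 / Real.pi * (DL fun s => Complex.exp (-α * s) * v s).toReal := by gcongr
        _ ≤ _ := by
          refine le_trans ?_ h2
          exact le_add_of_nonneg_left (by positivity)
        _ ≤ _ := by gcongr
    have h4 := mul_le_mul_of_nonneg_left h3 (show 0 ≤ 2 * Real.pi * α⁻¹ by positivity)
    refine le_trans (le_of_eq ?_) (h4.trans (le_of_eq ?_))
    · field_simp
    · field_simp
  have hinv : Tendsto (fun m => (a m)⁻¹) atTop (nhds 0) := tendsto_inv_atTop_zero.comp hat
  have hex : ∀ t : ℝ, 0 < t → Tendsto (fun m => Real.exp (-2 * a m * t)) atTop (nhds 0) := by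
    intro t ht
    have h1 : Tendsto (fun m => (-2 * t) * a m) atTop atBot :=
      hat.const_mul_atTop_of_neg (by linarith)
    refine (Real.tendsto_exp_atBot.comp h1).congr fun m => ?_
    simp only [Function.comp]
    congr 1; ring
  have hl1 := (((tendsto_const_nhds (x := (1:ℝ))).sub (hex x₀ hx)).mul_const L)
  have hex1 := hex 1 one_pos
  simp only [mul_one] at hex1
  have hl2 := ((((hinv.const_mul (2 * Real.pi)).mul hex1).mul_const (‖u 1‖ ^ 2)).add
    ((((hinv.pow 2).add hinv).mul_const K).add
      (((tendsto_const_nhds (x := (1:ℝ))).add hinv).mul_const N))).const_mul C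
  have hfinal := le_of_tendsto_of_tendsto' hl1 hl2 key
  simp only [sub_zero, one_mul, mul_zero, zero_mul, zero_add, add_zero, ne_eq,
    OfNat.ofNat_ne_zero, not_false_eq_true, zero_pow] at hfinal
  rw [← ENNReal.ofReal_toReal hLfin]
  exact ENNReal.ofReal_le_ofReal hfinal

/-- Translate of `f` to the left by `e`, cut off outside the half-plane. -/
def shiftF (f : ℂ → ℂ) (e : ℝ) : ℂ → ℂ := fun s => if s ∈ RHP then f (s + (e : ℂ)) else 0

lemma shift_mem {s : ℂ} (hs : s ∈ RHP) {e : ℝ} (he : 0 < e) : s + (e : ℂ) ∈ RHP := by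
  have : 0 < s.re := hs
  show 0 < (s + (e : ℂ)).re
  simp; linarith

lemma shift_diff {f : ℂ → ℂ} (hf : DifferentiableOn ℂ f RHP) {e : ℝ} (he : 0 < e) {s : ℂ}
    (hs : s ∈ RHP) : HasDerivAt (shiftF f e) (deriv f (s + (e : ℂ))) s := by
  have h1 : HasDerivAt (fun s : ℂ => f (s + (e : ℂ))) (deriv f (s + (e : ℂ))) s :=
    (hf.differentiableAt (isOpen_RHP.mem_nhds (shift_mem hs he))).hasDerivAt.comp_add_const s _
  refine h1.congr_of_eventuallyEq ?_
  filter_upwards [isOpen_RHP.mem_nhds hs] with z hz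
  simp [shiftF, hz]

lemma main_bound {T : (ℂ → ℂ) → ℂ → ℂ} {C : ℝ} (hC : 0 ≤ C) {a : ℕ → ℝ} (ha : ∀ m, 0 < a m)
    (hat : Tendsto a atTop atTop)
    (hH : ∀ f ∈ H2Space, T f ∈ H2Space)
    (hD : ∀ g ∈ DCSpace, T g ∈ DCSpace ∧ hpDirNormSq (T g) ≤ C * hpDirNormSq g)
    (hcom : ∀ m f, T (fun s => Complex.exp (-a m * s) * f s) =
      fun s => Complex.exp (-a m * s) * T f s)
    (hpt : ∀ (u : ℕ → ℂ → ℂ) (f : ℂ → ℂ), (∀ s, Tendsto (fun k => u k s) atTop (nhds (f s))) →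
      ∀ s, Tendsto (fun k => T (u k) s) atTop (nhds (T f s)))
    {f : ℂ → ℂ} (hf : f ∈ H2Space) : hpHardyNormSq (T f) ≤ C * hpHardyNormSq f := by
  set N := hpHardyNormSq f with hNd
  have hN : 0 ≤ N := hardy_nonneg f
  have hfd := hf.1.1
  have hTf := hH f hf
  have hb : ∀ x, 0 < x → Lsq f x ≤ ENNReal.ofReal N := fun x hx => H2_Lsq_le hf hx
  refine (H2_of_Lsq hTf.1.1 hTf.2 (by positivity) fun x hx => ?_).2
  set e : ℕ → ℝ := fun k => 1 / ((k : ℝ) + 1) with he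
  have he0 : ∀ k, 0 < e k := fun k => by simp only [he]; positivity
  have hud : ∀ k, DifferentiableOn ℂ (shiftF f (e k)) RHP := fun k s hs =>
    (shift_diff hfd (he0 k) hs).differentiableAt.differentiableWithinAt
  have hu0 : ∀ k s, s ∉ RHP → shiftF f (e k) s = 0 := fun k s hs => by simp [shiftF, hs]
  have hcoord : ∀ (k : ℕ) (x y : ℝ), (x : ℂ) + (y : ℂ) * Complex.I + (e k : ℂ) =
      ((x + e k : ℝ) : ℂ) + (y : ℂ) * Complex.I := by
    intro k x y; push_cast; ring
  have hLu : ∀ k x, 0 < x → Lsq (shiftF f (e k)) x = Lsq f (x + e k) := by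
    intro k x hx
    have hx' : (x : ℂ) ∈ RHP := by simpa [RHP] using hx
    unfold Lsq
    refine lintegral_congr fun y => ?_
    rw [shiftF, if_pos (add_mul_I_mem hx' y), hcoord]
  have hLu' : ∀ k x, 0 < x → Lsq (deriv (shiftF f (e k))) x = Lsq (deriv f) (x + e k) := by
    intro k x hx
    have hx' : (x : ℂ) ∈ RHP := by simpa [RHP] using hx
    unfold Lsq
    refine lintegral_congr fun y => ?_
    rw [(shift_diff hfd (he0 k) (add_mul_I_mem hx' y)).deriv, hcoord]
  have hub : ∀ k x, 0 < x → Lsq (shiftF f (e k)) x ≤ ENNReal.ofReal N := fun k x hx => by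
    rw [hLu k x hx]; exact hb _ (by have := he0 k; linarith)
  have huH : ∀ k, shiftF f (e k) ∈ H2Space := fun k =>
    (H2_of_Lsq (hud k) (hu0 k) hN (hub k)).1
  have hstep : ∀ k, Lsq (T (shiftF f (e k))) x ≤ ENNReal.ofReal (C * N) := by
    intro k
    refine step_one hC ha hat hH hD hcom (huH k) hN (K := N / (e k) ^ 2) (by positivity)
      (hub k) (fun x hx => ?_) hx
    rw [hLu' k x hx]
    exact Lsq_deriv_le hfd hN hb (he0 k) (by linarith)
  have het : Tendsto e atTop (nhds 0) := tendsto_one_div_add_atTop_nhds_zero_nat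
  have hconv : ∀ s, Tendsto (fun k => shiftF f (e k) s) atTop (nhds (f s)) := by
    intro s
    by_cases hs : s ∈ RHP
    · have h1 : ContinuousAt f s := (hfd.differentiableAt (isOpen_RHP.mem_nhds hs)).continuousAt
      have h2 : Tendsto (fun k => s + ((e k : ℝ) : ℂ)) atTop (nhds s) := by
        have := ((Complex.continuous_ofReal.tendsto 0).comp het).const_add s
        simpa using this
      refine (h1.tendsto.comp h2).congr fun k => ?_
      simp [shiftF, hs]
    · simp [shiftF, hs, hf.2 s hs]
  have hx' : (x : ℂ) ∈ RHP := by simpa [RHP] using hx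
  have hTc := hpt _ _ hconv
  have hfat : Lsq (T f) x ≤ liminf (fun k => Lsq (T (shiftF f (e k))) x) atTop := by
    unfold Lsq
    refine le_trans (le_of_eq ?_) (lintegral_liminf_le fun k =>
      (continuous_line (hH _ (huH k)).1.1.continuousOn hx').enorm.measurable.pow_const 2)
    refine lintegral_congr fun y => ?_
    have h1 := hTc ((x : ℂ) + (y : ℂ) * Complex.I)
    have h2 : Tendsto (fun k => ‖T (shiftF f (e k)) ((x : ℂ) + (y : ℂ) * Complex.I)‖ₑ ^ 2) atTop
        (nhds (‖T f ((x : ℂ) + (y : ℂ) * Complex.I)‖ₑ ^ 2)) :=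
      ((ENNReal.continuous_pow 2).tendsto _).comp h1.enorm
    exact h2.liminf_eq.symm
  refine hfat.trans ?_
  exact (liminf_le_liminf (Eventually.of_forall hstep)).trans (by simp)

lemma opSub_iter_H2 {W : (ℂ → ℂ) → ℂ → ℂ} (hW : ∀ f ∈ H2Space, W f ∈ H2Space) (lam : ℂ) (n : ℕ) :
    ∀ f ∈ H2Space, (opSub W lam)^[n] f ∈ H2Space := by
  induction n with
  | zero => intro f hf; simpa using hf
  | succ n ih =>
    intro f hf
    rw [Function.iterate_succ_apply']
    exact H2_sub (hW _ (ih f hf)) (ih f hf) lam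

lemma opSub_iter_D {W : (ℂ → ℂ) → ℂ → ℂ} {C : ℝ} (hC : 0 ≤ C)
    (hW : ∀ g ∈ DCSpace, W g ∈ DCSpace ∧ hpDirNormSq (W g) ≤ C * hpDirNormSq g)
    (lam : ℂ) (n : ℕ) :
    ∀ g ∈ DCSpace, (opSub W lam)^[n] g ∈ DCSpace ∧
      hpDirNormSq ((opSub W lam)^[n] g) ≤ (2 * C + 2 * ‖lam‖ ^ 2) ^ n * hpDirNormSq g := by
  induction n with
  | zero => intro f hf; simpa using hf
  | succ n ih =>
    intro f hf
    rw [Function.iterate_succ_apply']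
    obtain ⟨h1, h2⟩ := ih f hf
    obtain ⟨h3, h4⟩ := hW _ h1
    obtain ⟨h5, h6⟩ := DC_sub h3 h1 lam
    refine ⟨h5, h6.trans ?_⟩
    calc _ ≤ (2 * C + 2 * ‖lam‖ ^ 2) * hpDirNormSq ((opSub W lam)^[n] f) := by linarith
      _ ≤ (2 * C + 2 * ‖lam‖ ^ 2) * ((2 * C + 2 * ‖lam‖ ^ 2) ^ n * hpDirNormSq f) := by gcongr
      _ = _ := by ring

lemma opSub_iter_pt (h : ℂ → ℂ) (c : ℝ) (lam : ℂ) (n : ℕ) (u : ℕ → ℂ → ℂ) (f : ℂ → ℂ)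
    (hu : ∀ s, Tendsto (fun k => u k s) atTop (nhds (f s))) :
    ∀ s, Tendsto (fun k => (opSub (WopHp h c) lam)^[n] (u k) s) atTop
      (nhds ((opSub (WopHp h c) lam)^[n] f s)) := by
  induction n with
  | zero => simpa using hu
  | succ n ih =>
    intro s
    simp only [Function.iterate_succ_apply']
    refine Tendsto.sub ?_ ((ih s).const_mul lam)
    unfold WopHp
    by_cases hs : s ∈ RHP
    · simp only [hs, if_true]
      exact (ih _).const_mul _
    · simp [hs]

lemma opSub_iter_com (h : ℂ → ℂ) {c : ℝ} (lam : ℂ) {a : ℝ}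
    (ha : Complex.exp (-a * (c * Complex.I)) = 1) (n : ℕ) (f : ℂ → ℂ) :
    (opSub (WopHp h c) lam)^[n] (fun s => Complex.exp (-a * s) * f s) =
      fun s => Complex.exp (-a * s) * (opSub (WopHp h c) lam)^[n] f s := by
  induction n with
  | zero => simp
  | succ n ih =>
    rw [Function.iterate_succ_apply', Function.iterate_succ_apply', ih]
    funext s
    unfold opSub WopHp
    by_cases hs : s ∈ RHP
    · simp only [hs, if_true]
      rw [mul_add, Complex.exp_add, ha]
      ring
    · simp only [hs, if_false]
      ring

lemma norms_le (c : ℝ) (hc : 0 < c) (ht : ℂ → ℂ)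
    (hbdH2 : ∃ C : ℝ, 0 ≤ C ∧ ∀ f ∈ H2Space, WopHp ht c f ∈ H2Space ∧
      hpHardyNormSq (WopHp ht c f) ≤ C * hpHardyNormSq f)
    (hbdD : ∃ C : ℝ, 0 ≤ C ∧ ∀ g ∈ DCSpace, WopHp ht c g ∈ DCSpace ∧
      hpDirNormSq (WopHp ht c g) ≤ C * hpDirNormSq g) (lam : ℂ) (n : ℕ) :
    opNormSqH2 ((opSub (WopHp ht c) lam)^[n]) ≤ opNormSqD ((opSub (WopHp ht c) lam)^[n]) := by
  obtain ⟨C₁, hC₁, h1⟩ := hbdH2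
  obtain ⟨C₂, hC₂, h2⟩ := hbdD
  have hH := opSub_iter_H2 (fun f hf => (h1 f hf).1) lam n
  refine csInf_le_csInf ⟨0, fun C hC => hC.1⟩
    ⟨(2 * C₂ + 2 * ‖lam‖ ^ 2) ^ n, by positivity, opSub_iter_D hC₂ h2 lam n⟩ ?_
  rintro C ⟨hC, hD⟩
  refine ⟨hC, fun f hf => ⟨hH f hf, ?_⟩⟩
  have hpi := Real.pi_pos
  refine main_bound (a := fun m : ℕ => (2 * Real.pi / c) * ((m : ℝ) + 1)) hC
    (fun m => by positivity) ?_ hH hD (fun m f => ?_) (opSub_iter_pt ht c lam n) hf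
  · exact (tendsto_atTop_add_const_right _ _ tendsto_natCast_atTop_atTop).const_mul_atTop
      (by positivity)
  · refine opSub_iter_com ht lam ?_ n f
    rw [Complex.exp_eq_one_iff]
    refine ⟨-((m : ℤ) + 1), ?_⟩
    have hc' : (c : ℂ) ≠ 0 := by exact_mod_cast hc.ne'
    push_cast
    field_simp

/-- Let `τ(s) = s + ic` (`c > 0`) be a parabolic self-map of `ℂ₊`, let `h̃` be
holomorphic on `ℂ₊`, and suppose `W̃ : f ↦ h̃·(f∘τ)` is bounded on both
`H²(ℂ₊)` and `𝒟(ℂ₊)`. Then for every `λ ∈ ℂ` and `n ≥ 1`,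
`‖(W̃ − λI)ⁿ‖_{H²(ℂ₊)} ≤ ‖(W̃ − λI)ⁿ‖_{𝒟(ℂ₊)}`, and consequently
`ρ_{H²(ℂ₊)}(W̃ − λI) ≤ ρ_{𝒟(ℂ₊)}(W̃ − λI)`. -/
theorem halfplane_hardy_dirichlet_norm_ineq (c : ℝ) (hc : 0 < c)
    (ht : ℂ → ℂ) (hth : DifferentiableOn ℂ ht RHP)
    (hbdH2 : ∃ C : ℝ, 0 ≤ C ∧ ∀ f ∈ H2Space, WopHp ht c f ∈ H2Space ∧
      hpHardyNormSq (WopHp ht c f) ≤ C * hpHardyNormSq f)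
    (hbdD : ∃ C : ℝ, 0 ≤ C ∧ ∀ g ∈ DCSpace, WopHp ht c g ∈ DCSpace ∧
      hpDirNormSq (WopHp ht c g) ≤ C * hpDirNormSq g) :
    ∀ lam : ℂ,
      (∀ n : ℕ, 1 ≤ n →
        opNormSqH2 ((opSub (WopHp ht c) lam)^[n]) ≤
          opNormSqD ((opSub (WopHp ht c) lam)^[n])) ∧
      rhoH2 (opSub (WopHp ht c) lam) ≤ rhoD (opSub (WopHp ht c) lam) := by
  intro lam
  refine ⟨fun n _ => norms_le c hc ht hbdH2 hbdD lam n, ?_⟩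
  have hnnH : ∀ n, 0 ≤ opNormSqH2 ((opSub (WopHp ht c) lam)^[n]) := fun n =>
    Real.sInf_nonneg fun C hC => hC.1
  have hnnD : ∀ n, 0 ≤ opNormSqD ((opSub (WopHp ht c) lam)^[n]) := fun n =>
    Real.sInf_nonneg fun C hC => hC.1
  obtain ⟨C₂, hC₂, h2⟩ := id hbdD
  set K : ℝ := 2 * C₂ + 2 * ‖lam‖ ^ 2 with hK
  have hK0 : 0 ≤ K := by positivity
  refine limsup_le_limsup (Eventually.of_forall fun n => ?_) ?_ ?_
  · exact Real.rpow_le_rpow (hnnH n) (norms_le c hc ht hbdH2 hbdD lam n) (by positivity)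
  · refine IsBoundedUnder.isCoboundedUnder_le
      (isBoundedUnder_of_eventually_ge (a := 0) (Eventually.of_forall fun n => ?_))
    exact Real.rpow_nonneg (hnnH n) _
  · refine isBoundedUnder_of_eventually_le (a := K ^ ((1:ℝ) / 2)) ?_
    filter_upwards [eventually_ge_atTop 1] with n hn
    have h3 : opNormSqD ((opSub (WopHp ht c) lam)^[n]) ≤ K ^ n :=
      csInf_le ⟨0, fun C hC => hC.1⟩ ⟨by positivity, opSub_iter_D hC₂ h2 lam n⟩
    refine (Real.rpow_le_rpow (hnnD n) h3 (by positivity)).trans (le_of_eq ?_)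
    rw [← Real.rpow_natCast, ← Real.rpow_mul hK0]
    congr 1
    have : (n : ℝ) ≠ 0 := by positivity
    field_simp
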